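/- Let S be a proper convex subset of the chambers of a hyperplane arrangement 𝓗 in general position in ℝ^d. Assume |S| = Σ_{i=0}^d C(k,i) for some real k ≥ d−1, where C(k,i) denotes the generalized binomial coefficient k(k−1)⋯(k−i+1)/i!. Then |∂S| ≥ Σ_{i=0}^{d−1} C(k,i). -/

import Mathlib

open Set Topology

noncomputable section

/-- A hyperplane arrangement of `n` affine hyperplanes in `ℝ^d`, given by
nonzero normal vectors and offsets: the `i`-th hyperplane is
`{x | ∑ j, normal i j * x j = offset i}`. -/
structure Arrangement (d n : ℕ) where
  normal : Fin n → (Fin d → ℝ)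
  offset : Fin n → ℝ
  normal_ne : ∀ i, normal i ≠ 0

/-- The thickening (regular open hull) `T_S` of a set `S` of chambers. -/
def thickening {d : ℕ} (S : Set (Set (Fin d → ℝ))) : Set (Fin d → ℝ) :=
  interior (closure (⋃ C ∈ S, C))

/-- The set of connected components of a subset `X` of a topological space. -/
def connComps {α : Type*} [TopologicalSpace α] (X : Set α) : Set (Set α) :=
  {c | ∃ x ∈ X, c = connectedComponentIn X x}

namespace Arrangement

variable {d n : ℕ} (𝓗 : Arrangement d n)

/-- The `i`-th hyperplane of the arrangement. -/
def H (i : Fin n) : Set (Fin d → ℝ) := {x | ∑ j, 𝓗.normal i j * x j = 𝓗.offset i}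

/-- The positive open half-space determined by the `i`-th hyperplane. -/
def pos (i : Fin n) : Set (Fin d → ℝ) := {x | 𝓗.offset i < ∑ j, 𝓗.normal i j * x j}

/-- The negative open half-space determined by the `i`-th hyperplane. -/
def neg (i : Fin n) : Set (Fin d → ℝ) := {x | ∑ j, 𝓗.normal i j * x j < 𝓗.offset i}

/-- The complement of the union of the hyperplanes. -/
def free : Set (Fin d → ℝ) := {x | ∀ i, x ∉ 𝓗.H i}

/-- The chambers: connected components of the complement of the hyperplanes. -/
def chambers : Set (Set (Fin d → ℝ)) :=
  {C | ∃ x ∈ 𝓗.free, C = connectedComponentIn 𝓗.free x}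

/-- General position: the normals of any `≤ d` hyperplanes are linearly independent
(so that their intersection is an affine subspace of the right dimension), and no
`d+1` hyperplanes have a common point. -/
def GeneralPosition : Prop :=
  (∀ A : Finset (Fin n), A.card ≤ d →
      LinearIndependent ℝ (fun i : A => 𝓗.normal i.1)) ∧
  (∀ A : Finset (Fin n), A.card = d + 1 → (⋂ i ∈ A, 𝓗.H i) = ∅)

/-- Hyperplane `e` separates `C` from `C'`. -/
def Separates (e : Fin n) (C C' : Set (Fin d → ℝ)) : Prop :=
  (C ⊆ 𝓗.pos e ∧ C' ⊆ 𝓗.neg e) ∨ (C ⊆ 𝓗.neg e ∧ C' ⊆ 𝓗.pos e)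

/-- Adjacency in the chamber graph: two chambers are adjacent iff they are separated
by exactly one hyperplane (equivalently, share a common facet). -/
def Adj (C C' : Set (Fin d → ℝ)) : Prop :=
  C ∈ 𝓗.chambers ∧ C' ∈ 𝓗.chambers ∧ ∃! e : Fin n, 𝓗.Separates e C C'

/-- The edge boundary of a set `S` of chambers, encoded as the set of ordered pairs
`(C, C')` of adjacent chambers with `C ∈ S` and `C' ∉ S` (each boundary edge is thus
counted exactly once). -/
def edgeBoundary (S : Set (Set (Fin d → ℝ))) :
    Set ((Set (Fin d → ℝ)) × (Set (Fin d → ℝ))) :=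
  {q | q.1 ∈ S ∧ q.2 ∉ S ∧ 𝓗.Adj q.1 q.2}

/-- The stratum `T_S(A) = T_S ∩ L_A`. -/
def stratum (S : Set (Set (Fin d → ℝ))) (A : Finset (Fin n)) : Set (Fin d → ℝ) :=
  thickening S ∩ ⋂ i ∈ A, 𝓗.H i

/-- The support of `S`: those `A` with nonempty stratum. -/
def supp (S : Set (Set (Fin d → ℝ))) : Set (Finset (Fin n)) :=
  {A | (𝓗.stratum S A).Nonempty}

/-- `H_f` bounds the stratum `T_S(A)`: the stratum lies entirely in one of the open
half-spaces of `H_f`, and `H_f` meets the closure of the stratum within `L_A`. -/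
def Bounds (f : Fin n) (S : Set (Set (Fin d → ℝ))) (A : Finset (Fin n)) : Prop :=
  (𝓗.stratum S A ⊆ 𝓗.pos f ∨ 𝓗.stratum S A ⊆ 𝓗.neg f) ∧
  (𝓗.H f ∩ closure (𝓗.stratum S A) ∩ ⋂ i ∈ A, 𝓗.H i).Nonempty

/-- `S` is strata-connected if every nonempty stratum is connected. -/
def StrataConnected (S : Set (Set (Fin d → ℝ))) : Prop :=
  ∀ A ∈ 𝓗.supp S, IsConnected (𝓗.stratum S A)

end Arrangement

/-- The generalized binomial coefficient `C(x, i) = x(x-1)⋯(x-i+1)/i!`. -/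
noncomputable def gchoose (x : ℝ) (i : ℕ) : ℝ :=
  (∏ j ∈ Finset.range i, (x - j)) / (Nat.factorial i)

lemma gchoose_zero' (x : ℝ) : gchoose x 0 = 1 := by simp [gchoose]

lemma gchoose_pascal (x : ℝ) (i : ℕ) :
    gchoose x (i+1) = gchoose (x-1) (i+1) + gchoose (x-1) i := by
  unfold gchoose
  have h1 : ∏ j ∈ Finset.range (i+1), (x - j) = x * ∏ j ∈ Finset.range i, (x - 1 - j) := by
    rw [Finset.prod_range_succ']
    rw [mul_comm]
    congr 1
    · simp
    · apply Finset.prod_congr rfl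
      intro j _
      push_cast; ring
  rw [h1, Finset.prod_range_succ, Nat.factorial_succ]
  have : (Nat.factorial i : ℝ) ≠ 0 := by positivity
  push_cast
  field_simp
  ring

lemma gchoose_nonneg (x : ℝ) (i : ℕ) (h : (i : ℝ) - 1 ≤ x) : 0 ≤ gchoose x i := by
  unfold gchoose
  apply div_nonneg _ (by positivity)
  apply Finset.prod_nonneg
  intro j hj
  have : ((j:ℝ) + 1) ≤ i := by exact_mod_cast Finset.mem_range.1 hj
  linarith

lemma gchoose_mono {x y : ℝ} (i : ℕ) (h : (i : ℝ) - 1 ≤ x) (hxy : x ≤ y) :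
    gchoose x i ≤ gchoose y i := by
  unfold gchoose
  apply div_le_div_of_nonneg_right _ (by positivity)
  apply Finset.prod_le_prod
  · intro j hj
    have : ((j:ℝ) + 1) ≤ i := by exact_mod_cast Finset.mem_range.1 hj
    linarith
  · intro j hj
    linarith

lemma gchoose_self_succ (r : ℕ) : gchoose (r : ℝ) (r+1) = 0 := by
  unfold gchoose
  rw [Finset.prod_eq_zero (i := r)] <;> simp

lemma gchoose_self (r : ℕ) : gchoose (r : ℝ) r = 1 := by
  induction r with
  | zero => exact gchoose_zero' _
  | succ r ih =>
    rw [gchoose_pascal]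
    push_cast
    rw [add_sub_cancel_right, gchoose_self_succ, ih, zero_add]

lemma gchoose_succ_self (r : ℕ) : gchoose ((r : ℝ) + 1) r = r + 1 := by
  induction r with
  | zero => simp [gchoose_zero']
  | succ r ih =>
    rw [gchoose_pascal]
    push_cast
    rw [add_sub_cancel_right, ih]
    have := gchoose_self (r+1)
    push_cast at this
    rw [this]; ring

open scoped FinsetFamily in
lemma exists_initSeg_card {n r : ℕ} (m : ℕ)
    (hm : m ≤ (Finset.powersetCard r (Finset.univ : Finset (Fin n))).card) :
    ∃ C : Finset (Finset (Fin n)), Finset.Colex.IsInitSeg C r ∧ C.card = m := by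
  induction m with
  | zero => exact ⟨∅, by simp, by simp⟩
  | succ m ih =>
    obtain ⟨C, hC, hCm⟩ := ih (by omega)
    have hne : ((Finset.powersetCard r (Finset.univ : Finset (Fin n))) \ C).Nonempty := by
      rw [← Finset.card_pos]
      have := Finset.le_card_sdiff C (Finset.powersetCard r (Finset.univ : Finset (Fin n)))
      omega
    obtain ⟨s, hs, hmin⟩ := Finset.exists_min_image _ (fun s => toColex s) hne
    simp only [Finset.mem_sdiff, Finset.mem_powersetCard, Finset.subset_univ, true_and] at hs hmin
    refine ⟨insert s C, ⟨?_, ?_⟩, ?_⟩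
    · intro t ht
      simp only [Finset.coe_insert, Set.mem_insert_iff, Finset.mem_coe] at ht
      rcases ht with rfl | ht
      · exact hs.1
      · exact hC.1 ht
    · rintro t u ht ⟨hlt, hu⟩
      rw [Finset.mem_insert] at ht ⊢
      right
      rcases ht with rfl | ht
      · by_contra huC
        exact absurd hlt (not_lt.2 (hmin u ⟨hu, huC⟩))
      · exact hC.2 ht ⟨hlt, hu⟩
    · rw [Finset.card_insert_of_notMem hs.2, hCm]

open scoped FinsetFamily in
lemma lovasz_real {n : ℕ} (r : ℕ) : ∀ (m : ℕ) (A : Finset (Finset (Fin n))), A.card = m →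
    A.Nonempty → (A : Set (Finset (Fin n))).Sized (r+1) → ∀ x : ℝ, (r : ℝ) ≤ x →
    gchoose x (r+1) ≤ A.card → gchoose x r ≤ (Finset.shadow A).card := by
  induction r with
  | zero =>
    intro m A _ hA hs x hx h
    rw [gchoose_zero']
    obtain ⟨s, hsA⟩ := hA
    have hc : s.card = 1 := hs hsA
    obtain ⟨a, rfl⟩ := Finset.card_eq_one.1 hc
    have : 0 < (Finset.shadow A).card :=
      Finset.card_pos.2 ⟨_, Finset.erase_mem_shadow hsA (Finset.mem_singleton_self a)⟩
    exact_mod_cast this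
  | succ r ihr =>
    intro m
    induction m using Nat.strong_induction_on with
    | _ m ihm =>
    intro A hAm hA hs x hx hAx
    by_cases hxr : x ≤ r + 2
    · obtain ⟨s, hsA⟩ := hA
      have hc : s.card = r + 1 + 1 := hs hsA
      have h1 : s.card ≤ (Finset.shadow A).card := by
        rw [← Finset.card_image_of_injOn (s := s) (f := fun a => s.erase a)]
        · apply Finset.card_le_card
          intro t ht
          obtain ⟨a, ha, rfl⟩ := Finset.mem_image.1 ht
          exact Finset.erase_mem_shadow hsA ha
        · exact Finset.erase_injOn s
      have h2 := gchoose_mono (x := x) (y := r+2) (r+1) (by push_cast at *; linarith) hxr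
      have h3 := gchoose_succ_self (r+1)
      push_cast at h3
      rw [show (r:ℝ) + 1 + 1 = r + 2 by ring] at h3
      have h4 : (r:ℝ) + 2 ≤ (Finset.shadow A).card := by
        rw [hc] at h1; exact_mod_cast h1
      linarith
    push Not at hxr
    obtain ⟨C, hC, hCm⟩ := exists_initSeg_card (n := n) (r := r+1+1) A.card
      (Finset.card_le_card fun s hsA => by simpa using hs hsA)
    have hkk := Finset.kruskal_katona hs hCm.le hC
    have hCne : C.Nonempty := by rw [← Finset.card_pos, hCm]; exact Finset.card_pos.2 hA
    have hn : 0 < n := by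
      obtain ⟨s, hsC⟩ := hCne
      have := hC.1 hsC
      have : s.Nonempty := by rw [← Finset.card_pos]; omega
      exact this.choose.pos
    set z : Fin n := ⟨0, hn⟩ with hz
    have hzle : ∀ i : Fin n, i ≠ z → z < i := by
      intro i hi
      rw [Fin.lt_def]
      have : i.1 ≠ 0 := fun h => hi (Fin.ext h)
      simp [hz]; omega
    set C0 := (C.filter (z ∈ ·)).image (Finset.erase · z) with hC0
    set C1 := C.filter (z ∉ ·) with hC1
    have hC0card : C0.card = (C.filter (z ∈ ·)).card := by
      apply Finset.card_image_of_injOn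
      intro s hs t ht h
      simp only [Finset.coe_filter, Set.mem_ofPred_eq] at hs ht
      simp only at h
      rw [← Finset.insert_erase hs.2, h, Finset.insert_erase ht.2]
    have hsum : C0.card + C1.card = C.card := by
      rw [hC0card]; exact Finset.card_filter_add_card_filter_not _
    have hsub1 : Finset.shadow C1 ⊆ C0 := by
      intro t ht
      obtain ⟨s, hsC, a, ha, rfl⟩ := Finset.mem_shadow_iff.1 ht
      rw [hC1, Finset.mem_filter] at hsC
      have haz : a ≠ z := fun h => hsC.2 (h ▸ ha)
      have hzs : z ∉ s.erase a := fun h => hsC.2 (Finset.mem_of_mem_erase h)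
      refine Finset.mem_image.2 ⟨insert z (s.erase a), ?_, by simp [hzs]⟩
      rw [Finset.mem_filter]
      refine ⟨hC.2 hsC.1 ⟨?_, ?_⟩, Finset.mem_insert_self _ _⟩
      · rw [Finset.Colex.toColex_lt_toColex_iff_exists_forall_lt]
        refine ⟨a, ha, by simp [haz], ?_⟩
        intro b hb hbs
        have : b = z := by
          by_contra hbz
          simp [hbz] at hb
          exact hbs hb.2
        rw [this]; exact hzle a haz
      · rw [Finset.card_insert_of_notMem hzs, Finset.card_erase_of_mem ha, hC.1 hsC.1]; omega
    have hC1size : (C1 : Set (Finset (Fin n))).Sized (r+1+1) := fun s h =>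
      hC.1 (Finset.mem_filter.1 h).1
    have hC0size : (C0 : Set (Finset (Fin n))).Sized (r+1) := by
      intro s h
      obtain ⟨t, ht, rfl⟩ := Finset.mem_image.1 h
      rw [Finset.mem_filter] at ht
      simp only [Finset.card_erase_of_mem ht.2, hC.1 ht.1]; omega
    have hC0ne : C0.Nonempty := by
      by_contra hne
      rw [Finset.not_nonempty_iff_eq_empty] at hne
      obtain ⟨s, hsC⟩ := hCne
      by_cases hzs : z ∈ s
      · have : s.erase z ∈ C0 := Finset.mem_image.2 ⟨s, Finset.mem_filter.2 ⟨hsC, hzs⟩, rfl⟩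
        simp [hne] at this
      · have hs1 : s ∈ C1 := Finset.mem_filter.2 ⟨hsC, hzs⟩
        have : s.Nonempty := by rw [← Finset.card_pos, hC.1 hsC]; omega
        obtain ⟨a, ha⟩ := this
        have := hsub1 (Finset.erase_mem_shadow hs1 ha)
        simp [hne] at this
    have hsh : C0.card + (Finset.shadow C0).card ≤ (Finset.shadow C).card := by
      have hzC0 : ∀ s ∈ C0, z ∉ s := by
        intro s h
        obtain ⟨t, ht, rfl⟩ := Finset.mem_image.1 h
        simp
      have hzsh : ∀ s ∈ Finset.shadow C0, z ∉ s := by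
        intro s h
        obtain ⟨t, ht, a, ha, rfl⟩ := Finset.mem_shadow_iff.1 h
        exact fun h => hzC0 t ht (Finset.mem_of_mem_erase h)
      have hinj : ((Finset.shadow C0).image (insert z)).card = (Finset.shadow C0).card := by
        apply Finset.card_image_of_injOn
        intro s hs t ht h
        rw [← Finset.erase_insert (hzsh s hs), h, Finset.erase_insert (hzsh t ht)]
      rw [← hinj, ← Finset.card_union_of_disjoint]
      · apply Finset.card_le_card
        apply Finset.union_subset
        · intro s h
          obtain ⟨t, ht, rfl⟩ := Finset.mem_image.1 h
          rw [Finset.mem_filter] at ht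
          exact Finset.erase_mem_shadow ht.1 ht.2
        · intro s h
          obtain ⟨u, hu, rfl⟩ := Finset.mem_image.1 h
          obtain ⟨v, hv, a, ha, rfl⟩ := Finset.mem_shadow_iff.1 hu
          have hzv := hzC0 v hv
          obtain ⟨t, ht, rfl⟩ := Finset.mem_image.1 hv
          rw [Finset.mem_filter] at ht
          have haz : a ≠ z := fun h => hzv (h ▸ ha)
          have hat : a ∈ t := Finset.mem_of_mem_erase ha
          have : insert z ((t.erase z).erase a) = t.erase a := by
            rw [Finset.erase_right_comm, Finset.insert_erase]
            exact Finset.mem_erase.2 ⟨haz.symm, ht.2⟩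
          rw [this]
          exact Finset.erase_mem_shadow ht.1 hat
      · rw [Finset.disjoint_left]
        intro s h1 h2
        obtain ⟨u, hu, rfl⟩ := Finset.mem_image.1 h2
        exact hzC0 _ h1 (Finset.mem_insert_self _ _)
    push_cast at hx
    have hcase : gchoose (x-1) (r+1) ≤ C0.card := by
      by_contra hlt
      push Not at hlt
      have hp := gchoose_pascal x (r+1)
      have hsum' : (C0.card : ℝ) + C1.card = A.card := by rw [← hCm]; exact_mod_cast hsum
      have h1 : gchoose (x-1) (r+1+1) < C1.card := by linarith
      have h0 := gchoose_nonneg (x-1) (r+1+1) (by push_cast; linarith)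
      have hC1ne : C1.Nonempty := by
        rw [← Finset.card_pos]
        have : (0:ℝ) < C1.card := by linarith
        exact_mod_cast this
      have h2 := ihm C1.card (by have := Finset.card_pos.2 hC0ne; omega) C1 rfl hC1ne hC1size
        (x-1) (by push_cast; linarith) h1.le
      have h3 : ((Finset.shadow C1).card : ℝ) ≤ C0.card := by
        exact_mod_cast Finset.card_le_card hsub1
      linarith
    have h5 := ihr _ C0 rfl hC0ne hC0size (x-1) (by linarith) hcase
    have h6 := gchoose_pascal x r
    have h7 : ((C0.card : ℝ) + (Finset.shadow C0).card) ≤ (Finset.shadow A).card := by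
      exact_mod_cast hsh.trans hkk
    linarith

lemma slice_bound {n d : ℕ} (K : Finset (Finset (Fin n))) (hK : IsLowerSet (K : Set (Finset (Fin n))))
    (k : ℝ) (hk : (d : ℝ) - 1 ≤ k) (hne : (K.filter (fun s => s.card = d)).Nonempty)
    (hd : gchoose k d ≤ (K.filter (fun s => s.card = d)).card) (j : ℕ) :
    j ≤ d → (K.filter (fun s => s.card = d - j)).Nonempty ∧
      gchoose k (d - j) ≤ (K.filter (fun s => s.card = d - j)).card := by
  induction j with
  | zero => intro _; exact ⟨hne, hd⟩
  | succ j ih =>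
    intro hj
    obtain ⟨h1, h2⟩ := ih (by omega)
    obtain ⟨e, he⟩ : ∃ e, d - j = e + 1 := ⟨d - j - 1, by omega⟩
    rw [he] at h1 h2
    have he' : d - (j+1) = e := by omega
    rw [he']
    have hsub : Finset.shadow (K.filter (fun s => s.card = e + 1)) ⊆ K.filter (fun s => s.card = e) := by
      intro t ht
      obtain ⟨s, hs, a, ha, rfl⟩ := Finset.mem_shadow_iff.1 ht
      rw [Finset.mem_filter] at hs ⊢
      refine ⟨hK (Finset.erase_subset a s) hs.1, ?_⟩
      rw [Finset.card_erase_of_mem ha, hs.2]; rfl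
    constructor
    · obtain ⟨s, hs⟩ := h1
      have : s.Nonempty := by
        rw [← Finset.card_pos, (Finset.mem_filter.1 hs).2]; omega
      obtain ⟨a, ha⟩ := this
      exact ⟨_, hsub (Finset.erase_mem_shadow hs ha)⟩
    · have hek : (e : ℝ) ≤ k := by
        have : (e : ℝ) + 1 ≤ d := by exact_mod_cast (by omega : e + 1 ≤ d)
        linarith
      have := lovasz_real e _ _ rfl h1 (fun s hs => (Finset.mem_filter.1 hs).2) k hek h2
      refine this.trans ?_
      exact_mod_cast Finset.card_le_card hsub

/-- Numerical conclusion for a lower set of subsets of size at most `d`. -/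
lemma numeric {n d : ℕ} (K : Finset (Finset (Fin n))) (hK : IsLowerSet (K : Set (Finset (Fin n))))
    (hKd : ∀ s ∈ K, s.card ≤ d)
    (k : ℝ) (hk : (d : ℝ) - 1 ≤ k)
    (hcard : ∑ i ∈ Finset.range (d + 1), gchoose k i ≤ K.card) :
    ∑ i ∈ Finset.range d, gchoose k i ≤ (K.filter (fun s => s.card < d)).card := by
  by_cases hf : ((K.filter (fun s => s.card = d)).card : ℝ) ≤ gchoose k d
  · rw [Finset.sum_range_succ] at hcard
    have : (K.filter (fun s => s.card = d)).card + (K.filter (fun s => s.card < d)).card = K.card := by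
      rw [← Finset.card_union_of_disjoint]
      · congr 1
        ext s
        simp only [Finset.mem_union, Finset.mem_filter]
        constructor
        · tauto
        · intro h
          have := hKd s h
          rcases this.eq_or_lt with h' | h' <;> tauto
      · rw [Finset.disjoint_left]
        intro s h1 h2
        rw [Finset.mem_filter] at h1 h2
        omega
    have : ((K.filter (fun s => s.card = d)).card : ℝ) + (K.filter (fun s => s.card < d)).card = K.card := by
      exact_mod_cast this
    linarith
  · push Not at hf
    have h0 := gchoose_nonneg k d hk
    have hne : (K.filter (fun s => s.card = d)).Nonempty := by
      rw [← Finset.card_pos]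
      have : (0:ℝ) < (K.filter (fun s => s.card = d)).card := by linarith
      exact_mod_cast this
    have hb := fun j hj => (slice_bound K hK k hk hne hf.le j hj).2
    have : (K.filter (fun s => s.card < d)).card
        = ∑ i ∈ Finset.range d, (K.filter (fun s => s.card = i)).card := by
      rw [Finset.card_eq_sum_card_fiberwise (f := Finset.card) (t := Finset.range d)]
      · apply Finset.sum_congr rfl
        intro i hi
        rw [Finset.filter_filter]
        congr 1
        ext s
        simp only [Finset.mem_filter, Finset.mem_range] at *
        constructor
        · tauto
        · rintro ⟨h, rfl⟩; tauto
      · intro s hs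
        simpa using (Finset.mem_filter.1 hs).2
    rw [this]
    push_cast
    apply Finset.sum_le_sum
    intro i hi
    have := hb (d - i) (by omega)
    rw [Finset.mem_range] at hi
    rwa [show d - (d - i) = i by omega] at this

/-- Strongly shattered sets are at most as many as the family. -/
lemma strong_shatter {n : ℕ} (F G : Finset (Finset (Fin n)))
    (hG : ∀ A ∈ G, ∃ B : Finset (Fin n), Disjoint A B ∧ ∀ X ⊆ A, B ∪ X ∈ F) :
    G.card ≤ F.card := by
  have h1 := Finset.card_le_card_shatterer (Fᶜ)
  have h2 : (G.image compl).card = G.card := Finset.card_image_of_injective _ compl_injective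
  have h3 : Disjoint (G.image compl) (Fᶜ).shatterer := by
    rw [Finset.disjoint_left]
    intro s hs hsh
    obtain ⟨A, hA, rfl⟩ := Finset.mem_image.1 hs
    rw [Finset.mem_shatterer] at hsh
    obtain ⟨B, hAB, hB⟩ := hG A hA
    obtain ⟨u, hu, hueq⟩ := hsh (t := B) (by
      intro b hb; rw [Finset.mem_compl]; exact fun h => Finset.disjoint_left.1 hAB h hb)
    have := hB (A ∩ u) Finset.inter_subset_left
    rw [← hueq, ← Finset.union_inter_distrib_right, Finset.union_comm, Finset.union_compl,
      Finset.univ_inter] at this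
    exact Finset.mem_compl.1 hu this
  have h4 : (G.image compl).card + (Fᶜ).shatterer.card ≤ (Finset.univ : Finset (Finset (Fin n))).card := by
    rw [← Finset.card_union_of_disjoint h3]
    exact Finset.card_le_card (Finset.subset_univ _)
  have h5 := Finset.card_add_card_compl F
  rw [Finset.card_univ] at h4
  omega

namespace Arrangement

/-- Linear part of the `i`-th form. -/
def lin {d n : ℕ} (𝓗 : Arrangement d n) (i : Fin n) (w : Fin d → ℝ) : ℝ := ∑ j, 𝓗.normal i j * w j

/-- The `i`-th affine form. -/
def val {d n : ℕ} (𝓗 : Arrangement d n) (i : Fin n) (x : Fin d → ℝ) : ℝ :=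
  𝓗.lin i x - 𝓗.offset i

/-- The set of positive indices. -/
def sgn {d n : ℕ} (𝓗 : Arrangement d n) (x : Fin d → ℝ) : Finset (Fin n) :=
  Finset.univ.filter (fun i => 0 < 𝓗.val i x)

/-- The cell of a sign set. -/
def cell {d n : ℕ} (𝓗 : Arrangement d n) (P : Finset (Fin n)) : Set (Fin d → ℝ) :=
  {x | x ∈ 𝓗.free ∧ 𝓗.sgn x = P}

/-- Free points in the chambers of `S`. -/
def uni {d n : ℕ} (𝓗 : Arrangement d n) (S : Set (Set (Fin d → ℝ))) : Set (Fin d → ℝ) :=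
  {x | x ∈ 𝓗.free ∧ 𝓗.cell (𝓗.sgn x) ∈ S}

/-- The flat of `A`. -/
def flat {d n : ℕ} (𝓗 : Arrangement d n) (A : Finset (Fin n)) : Set (Fin d → ℝ) :=
  {x | ∀ i ∈ A, 𝓗.val i x = 0}

variable {d n : ℕ} (𝓗 : Arrangement d n)

lemma lin_add (i : Fin n) (x y : Fin d → ℝ) : 𝓗.lin i (x + y) = 𝓗.lin i x + 𝓗.lin i y := by
  simp [lin, mul_add, Finset.sum_add_distrib]

lemma lin_smul (i : Fin n) (t : ℝ) (y : Fin d → ℝ) : 𝓗.lin i (t • y) = t * 𝓗.lin i y := by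
  simp only [lin, Finset.mul_sum, Pi.smul_apply, smul_eq_mul]
  exact Finset.sum_congr rfl fun j _ => by ring

lemma lin_sub (i : Fin n) (x y : Fin d → ℝ) : 𝓗.lin i (x - y) = 𝓗.lin i x - 𝓗.lin i y := by
  simp [lin, mul_sub, Finset.sum_sub_distrib]

lemma val_add_smul (i : Fin n) (x w : Fin d → ℝ) (t : ℝ) :
    𝓗.val i (x + t • w) = 𝓗.val i x + t * 𝓗.lin i w := by
  rw [val, val, lin_add, lin_smul]; ring

lemma lin_sub_val (i : Fin n) (x y : Fin d → ℝ) : 𝓗.lin i (x - y) = 𝓗.val i x - 𝓗.val i y := by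
  rw [val, val, lin_sub]; ring

lemma val_line (i : Fin n) (x y z : Fin d → ℝ) (t : ℝ) :
    𝓗.val i (x + t • (y - z)) = 𝓗.val i x + t * (𝓗.val i y - 𝓗.val i z) := by
  rw [val_add_smul, lin_sub_val]

lemma val_comb (i : Fin n) (x y : Fin d → ℝ) (a b : ℝ) (h : a + b = 1) :
    𝓗.val i (a • x + b • y) = a * 𝓗.val i x + b * 𝓗.val i y := by
  rw [val, val, val, lin_add, lin_smul, lin_smul]
  linear_combination 𝓗.offset i * h

lemma continuous_val (i : Fin n) : Continuous (𝓗.val i) := by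
  unfold val lin
  fun_prop

lemma mem_H (i : Fin n) (x : Fin d → ℝ) : x ∈ 𝓗.H i ↔ 𝓗.val i x = 0 := by
  unfold H val lin
  rw [sub_eq_zero]; rfl

lemma mem_pos (i : Fin n) (x : Fin d → ℝ) : x ∈ 𝓗.pos i ↔ 0 < 𝓗.val i x := by
  unfold pos val lin
  rw [sub_pos]; rfl

lemma mem_neg (i : Fin n) (x : Fin d → ℝ) : x ∈ 𝓗.neg i ↔ 𝓗.val i x < 0 := by
  unfold neg val lin
  rw [sub_neg]; rfl

lemma mem_free (x : Fin d → ℝ) : x ∈ 𝓗.free ↔ ∀ i, 𝓗.val i x ≠ 0 := by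
  exact ⟨fun h i hi => h i ((𝓗.mem_H i x).2 hi), fun h i hi => h i ((𝓗.mem_H i x).1 hi)⟩

lemma mem_sgn (x : Fin d → ℝ) (i : Fin n) : i ∈ 𝓗.sgn x ↔ 0 < 𝓗.val i x := by simp [sgn]

lemma same_sgn {x y : Fin d → ℝ} (h : ∀ i, 0 < 𝓗.val i x * 𝓗.val i y) :
    x ∈ 𝓗.free ∧ 𝓗.sgn x = 𝓗.sgn y := by
  refine ⟨(𝓗.mem_free x).2 fun i hi => ?_, ?_⟩
  · have := h i; rw [hi] at this; simp at this
  · ext i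
    rw [mem_sgn, mem_sgn]
    exact pos_iff_pos_of_mul_pos (h i)

lemma sgn_mul {x y : Fin d → ℝ} (hx : x ∈ 𝓗.free) (hy : y ∈ 𝓗.free)
    (h : 𝓗.sgn x = 𝓗.sgn y) (i : Fin n) : 0 < 𝓗.val i x * 𝓗.val i y := by
  have h1 := (𝓗.mem_free x).1 hx i
  have h2 := (𝓗.mem_free y).1 hy i
  have h3 : 0 < 𝓗.val i x ↔ 0 < 𝓗.val i y := by rw [← mem_sgn, ← mem_sgn, h]
  rcases lt_or_gt_of_ne h1 with h1 | h1
  · rcases lt_or_gt_of_ne h2 with h2 | h2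
    · exact mul_pos_of_neg_of_neg h1 h2
    · exact absurd (h3.2 h2) (not_lt.2 h1.le)
  · exact mul_pos h1 (h3.1 h1)

lemma cell_eq {x : Fin d → ℝ} (hx : x ∈ 𝓗.free) :
    𝓗.cell (𝓗.sgn x) = {y | ∀ i, 0 < 𝓗.val i y * 𝓗.val i x} := by
  ext y
  constructor
  · rintro ⟨h1, h2⟩ i
    exact 𝓗.sgn_mul h1 hx h2 i
  · intro h; exact 𝓗.same_sgn h

lemma convex_cell {x : Fin d → ℝ} (hx : x ∈ 𝓗.free) : Convex ℝ (𝓗.cell (𝓗.sgn x)) := by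
  rw [cell_eq 𝓗 hx]
  intro y hy z hz a b ha hb hab i
  have h1 := hy i
  have h2 := hz i
  rw [val_comb 𝓗 i y z a b hab]
  rcases ha.eq_or_lt with rfl | ha
  · have : b = 1 := by linarith
    subst this; simpa using h2
  · nlinarith [mul_pos ha h1, mul_nonneg hb h2.le]

lemma isOpen_cell {x : Fin d → ℝ} (hx : x ∈ 𝓗.free) : IsOpen (𝓗.cell (𝓗.sgn x)) := by
  rw [cell_eq 𝓗 hx]
  have : {y | ∀ i, 0 < 𝓗.val i y * 𝓗.val i x} = ⋂ i, {y | 0 < 𝓗.val i y * 𝓗.val i x} := by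
    ext y; simp
  rw [this]
  exact isOpen_iInter_of_finite fun i =>
    isOpen_lt continuous_const ((𝓗.continuous_val i).mul continuous_const)

lemma comp_eq_cell {x : Fin d → ℝ} (hx : x ∈ 𝓗.free) :
    connectedComponentIn 𝓗.free x = 𝓗.cell (𝓗.sgn x) := by
  apply Set.Subset.antisymm
  · intro y hy
    have hyf := connectedComponentIn_subset _ _ hy
    refine ⟨hyf, ?_⟩
    have hpre : IsPreconnected (connectedComponentIn 𝓗.free x) := isPreconnected_connectedComponentIn
    have hxc := mem_connectedComponentIn hx
    ext i
    rw [mem_sgn, mem_sgn]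
    have key : ∀ u ∈ connectedComponentIn 𝓗.free x, ∀ v ∈ connectedComponentIn 𝓗.free x,
        0 < 𝓗.val i u → 0 < 𝓗.val i v := by
      intro u hu v hv h1
      by_contra h2
      push Not at h2
      have := hpre.intermediate_value hv hu (𝓗.continuous_val i).continuousOn ⟨h2, h1.le⟩
      obtain ⟨w, hw, hw0⟩ := this
      exact (𝓗.mem_free w).1 (connectedComponentIn_subset _ _ hw) i hw0
    exact ⟨key y hy x hxc, key x hxc y hy⟩
  · exact (𝓗.convex_cell hx).isPreconnected.subset_connectedComponentIn ⟨hx, rfl⟩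
      (fun y hy => hy.1)

lemma mem_chambers (C : Set (Fin d → ℝ)) :
    C ∈ 𝓗.chambers ↔ ∃ x ∈ 𝓗.free, C = 𝓗.cell (𝓗.sgn x) := by
  constructor
  · rintro ⟨x, hx, rfl⟩; exact ⟨x, hx, 𝓗.comp_eq_cell hx⟩
  · rintro ⟨x, hx, rfl⟩; exact ⟨x, hx, (𝓗.comp_eq_cell hx).symm⟩

lemma union_eq {S : Set (Set (Fin d → ℝ))} (hS : S ⊆ 𝓗.chambers) : (⋃ C ∈ S, C) = 𝓗.uni S := by
  ext x
  simp only [Set.mem_iUnion]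
  constructor
  · rintro ⟨C, hC, hx⟩
    obtain ⟨y, hy, rfl⟩ := (𝓗.mem_chambers C).1 (hS hC)
    exact ⟨hx.1, by rw [hx.2]; exact hC⟩
  · rintro ⟨hx, hC⟩
    exact ⟨_, hC, hx, rfl⟩

lemma uni_congr {S : Set (Set (Fin d → ℝ))} {x y : Fin d → ℝ} (hx : x ∈ 𝓗.uni S)
    (hy : y ∈ 𝓗.free) (h : 𝓗.sgn y = 𝓗.sgn x) : y ∈ 𝓗.uni S := ⟨hy, by rw [h]; exact hx.2⟩

lemma isOpen_uni (S : Set (Set (Fin d → ℝ))) : IsOpen (𝓗.uni S) := by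
  rw [isOpen_iff_forall_mem_open]
  intro x hx
  exact ⟨𝓗.cell (𝓗.sgn x), fun y hy => 𝓗.uni_congr hx hy.1 hy.2, 𝓗.isOpen_cell hx.1, hx.1, rfl⟩

lemma uni_sub {S : Set (Set (Fin d → ℝ))} (hS : S ⊆ 𝓗.chambers) : 𝓗.uni S ⊆ thickening S := by
  unfold thickening
  rw [union_eq 𝓗 hS]
  exact interior_maximal subset_closure (𝓗.isOpen_uni S)

lemma mem_uni_of_free {S : Set (Set (Fin d → ℝ))} (hS : S ⊆ 𝓗.chambers) {x : Fin d → ℝ}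
    (hx : x ∈ 𝓗.free) (hT : x ∈ thickening S) : x ∈ 𝓗.uni S := by
  unfold thickening at hT
  rw [union_eq 𝓗 hS] at hT
  have h := interior_subset hT
  rw [mem_closure_iff] at h
  obtain ⟨y, hy1, hy2⟩ := h _ (𝓗.isOpen_cell hx) ⟨hx, rfl⟩
  exact 𝓗.uni_congr hy2 hx hy1.2.symm

lemma exists_lin (hgp : 𝓗.GeneralPosition) (A : Finset (Fin n)) (hA : A.card ≤ d) (c : Fin n → ℝ) :
    ∃ w, ∀ i ∈ A, 𝓗.lin i w = c i := by
  have hli := hgp.1 A hA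
  let φ := (Module.Basis.span hli).constr ℝ (fun i : A => c i.1)
  obtain ⟨g, hg⟩ := LinearMap.exists_extend φ
  refine ⟨fun j => g (Pi.single j 1), fun i hi => ?_⟩
  have h1 : g (𝓗.normal i) = c i := by
    have h2 := (Module.Basis.span hli).constr_basis ℝ (fun i : A => c i.1) ⟨i, hi⟩
    have h3 := Module.Basis.span_apply hli ⟨i, hi⟩
    have h4 : g ((Module.Basis.span hli ⟨i, hi⟩ : _) : Fin d → ℝ) = φ (Module.Basis.span hli ⟨i, hi⟩) :=
      LinearMap.congr_fun hg (Module.Basis.span hli ⟨i, hi⟩)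
    exact (congrArg (fun v => g v.1) h3).symm.trans (h4.trans h2)
  rw [← h1]
  conv_rhs => rw [← Finset.univ_sum_single (𝓗.normal i)]
  rw [map_sum, lin]
  apply Finset.sum_congr rfl
  intro j _
  have : (Pi.single j (𝓗.normal i j) : Fin d → ℝ) = 𝓗.normal i j • Pi.single j 1 := by
    rw [← Pi.single_smul]; simp
  rw [this, map_smul, smul_eq_mul]

lemma exists_val (hgp : 𝓗.GeneralPosition) (A : Finset (Fin n)) (hA : A.card ≤ d) (c : Fin n → ℝ) :
    ∃ w, ∀ i ∈ A, 𝓗.val i w = c i := by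
  obtain ⟨w, hw⟩ := 𝓗.exists_lin hgp A hA (fun i => c i + 𝓗.offset i)
  exact ⟨w, fun i hi => by rw [val, hw i hi]; ring⟩

lemma card_le_of_flat (hgp : 𝓗.GeneralPosition) (A : Finset (Fin n)) {x : Fin d → ℝ}
    (hx : x ∈ 𝓗.flat A) : A.card ≤ d := by
  by_contra h
  push Not at h
  obtain ⟨B, hB, hBc⟩ := Finset.exists_subset_card_eq (Nat.succ_le_of_lt h)
  have := hgp.2 B hBc
  have hx' : x ∈ ⋂ i ∈ B, 𝓗.H i := by
    simp only [Set.mem_iInter]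
    intro i hi
    exact (𝓗.mem_H i x).2 (hx i (hB hi))
  rw [this] at hx'
  exact hx'

lemma exists_flat_one (hgp : 𝓗.GeneralPosition) (A : Finset (Fin n)) (hA : A.card + 1 ≤ d)
    {j : Fin n} (hj : j ∉ A) (c : ℝ) : ∃ y ∈ 𝓗.flat A, 𝓗.val j y = c := by
  obtain ⟨y, hy⟩ := 𝓗.exists_val hgp (insert j A) (by rwa [Finset.card_insert_of_notMem hj])
    (fun i => if i = j then c else 0)
  refine ⟨y, fun i hi => ?_, ?_⟩
  · rw [hy i (Finset.mem_insert_of_mem hi), if_neg]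
    rintro rfl; exact hj hi
  · rw [hy j (Finset.mem_insert_self _ _), if_pos rfl]

lemma exists_flat_two (hgp : 𝓗.GeneralPosition) (A : Finset (Fin n)) (hA : A.card + 1 ≤ d)
    {j l : Fin n} (hj : j ∉ A) (hl : l ∉ A) (hjl : j ≠ l) :
    ∃ y ∈ 𝓗.flat A, 𝓗.val j y = 0 ∧ 𝓗.val l y ≠ 0 := by
  by_cases h : A.card + 1 + 1 ≤ d
  · have hl' : l ∉ insert j A := by simp [hl, hjl.symm]
    obtain ⟨y, hy, hy1⟩ := 𝓗.exists_flat_one hgp (insert j A)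
      (by rwa [Finset.card_insert_of_notMem hj]) hl' 1
    exact ⟨y, fun i hi => hy i (Finset.mem_insert_of_mem hi), hy j (Finset.mem_insert_self _ _),
      by rw [hy1]; norm_num⟩
  · obtain ⟨y, hy, hy1⟩ := 𝓗.exists_flat_one hgp A hA hj 0
    refine ⟨y, hy, hy1, fun hl0 => h ?_⟩
    have := 𝓗.card_le_of_flat hgp (insert l (insert j A)) (x := y) (by
      intro i hi
      rw [Finset.mem_insert, Finset.mem_insert] at hi
      rcases hi with rfl | rfl | hi
      · exact hl0
      · exact hy1
      · exact hy i hi)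
    rwa [Finset.card_insert_of_notMem (by simp [hl, hjl.symm]), Finset.card_insert_of_notMem hj] at this

lemma flat_line (A : Finset (Fin n)) {x y : Fin d → ℝ} (hx : x ∈ 𝓗.flat A) (hy : y ∈ 𝓗.flat A)
    (t : ℝ) : x + t • (y - x) ∈ 𝓗.flat A := by
  intro i hi
  rw [val_line, hx i hi, hy i hi]; ring

end Arrangement

lemma perturb {d : ℕ} {ι : Type*} (L : Set (Fin d → ℝ))
    (hL : ∀ x ∈ L, ∀ y ∈ L, ∀ t : ℝ, x + t • (y - x) ∈ L)
    (g : ι → (Fin d → ℝ) → ℝ) (hgc : ∀ m, Continuous (g m))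
    (hga : ∀ m x y (t : ℝ), g m (x + t • (y - x)) = g m x + t * (g m y - g m x))
    (N : Set (Fin d → ℝ)) (hN : IsOpen N) (y : Fin d → ℝ) (hyN : y ∈ N) (hyL : y ∈ L)
    (s : Finset ι) : (∀ m ∈ s, ∃ z ∈ L, g m z ≠ 0) →
    ∃ y' ∈ N, y' ∈ L ∧ ∀ m ∈ s, g m y' ≠ 0 := by
  classical
  induction s using Finset.induction_on with
  | empty => intro _; exact ⟨y, hyN, hyL, by simp⟩
  | insert a s ha ih =>
    intro h
    obtain ⟨u, huN, huL, hu⟩ := ih fun m hm => h m (Finset.mem_insert_of_mem hm)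
    by_cases hau : g a u = 0
    · obtain ⟨z, hzL, hz⟩ := h a (Finset.mem_insert_self _ _)
      have hcont : Continuous (fun t : ℝ => u + t • (z - u)) := by fun_prop
      have h1 : ∀ᶠ t in 𝓝 (0:ℝ), u + t • (z - u) ∈ N :=
        hcont.continuousAt.eventually_mem (by simpa using hN.mem_nhds huN)
      have h2 : ∀ᶠ t in 𝓝 (0:ℝ), ∀ m ∈ s, g m (u + t • (z - u)) ≠ 0 := by
        rw [Filter.eventually_all_finset]
        intro m hm
        have : ContinuousAt (fun t : ℝ => g m (u + t • (z - u))) 0 :=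
          ((hgc m).comp hcont).continuousAt
        exact this.eventually_ne (by simpa using hu m hm)
      have h3 := ((h1.and h2).filter_mono nhdsWithin_le_nhds).and
        (self_mem_nhdsWithin : {0}ᶜ ∈ 𝓝[≠] (0:ℝ))
      obtain ⟨t, ⟨ht1, ht2⟩, ht3⟩ := h3.exists
      refine ⟨_, ht1, hL u huL z hzL t, ?_⟩
      intro m hm
      rcases Finset.mem_insert.1 hm with rfl | hm
      · rw [hga, hau]
        simp only [zero_add, sub_zero]
        exact mul_ne_zero ht3 hz
      · exact ht2 m hm
    · refine ⟨u, huN, huL, fun m hm => ?_⟩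
      rcases Finset.mem_insert.1 hm with rfl | hm
      · exact hau
      · exact hu m hm

lemma ray_exit {d : ℕ} (T : Set (Fin d → ℝ)) (hT : IsOpen T) (hc : Convex ℝ T)
    (x y : Fin d → ℝ) (hx : x ∈ T) (hy : y ∉ T) :
    ∃ s : ℝ, 0 < s ∧ x + s • (y - x) ∉ T ∧ (∀ t, 0 ≤ t → t < s → x + t • (y - x) ∈ T) ∧
      ∀ t, s < t → x + t • (y - x) ∉ closure T := by
  set γ : ℝ → (Fin d → ℝ) := fun t => x + t • (y - x) with hγ
  have hcont : Continuous γ := by fun_prop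
  have hpre : Convex ℝ (γ ⁻¹' T) := by
    intro a ha b hb u v hu hv huv
    have : γ (u • a + v • b) = u • γ a + v • γ b := by
      simp only [hγ]
      have : x = u • x + v • x := by rw [← add_smul, huv, one_smul]
      conv_lhs => rw [this]
      ext j
      simp only [Pi.add_apply, Pi.smul_apply, Pi.sub_apply, smul_eq_mul]
      linear_combination (-(u * a + v * b) * x j) * (huv)
    show γ _ ∈ T
    rw [this]
    exact hc ha hb hu hv huv
  have h0 : (0:ℝ) ∈ γ ⁻¹' T := by simpa [hγ] using hx
  have h1 : (1:ℝ) ∉ γ ⁻¹' T := by simpa [hγ] using hy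
  have hoc : (γ ⁻¹' T).OrdConnected := hpre.ordConnected
  have hbdd : BddAbove (γ ⁻¹' T) := by
    refine ⟨1, fun t ht => ?_⟩
    by_contra h
    push Not at h
    exact h1 (hoc.out h0 ht ⟨zero_le_one, h.le⟩)
  have hopen : IsOpen (γ ⁻¹' T) := hT.preimage hcont
  set s := sSup (γ ⁻¹' T) with hs
  have hsnot : s ∉ γ ⁻¹' T := by
    intro hmem
    obtain ⟨ε, hε, hb⟩ := Metric.isOpen_iff.1 hopen s hmem
    have : s + ε/2 ∈ γ ⁻¹' T := hb (by simp [abs_of_pos hε, hε])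
    have := le_csSup hbdd this
    linarith
  have hs0 : 0 ≤ s := le_csSup hbdd h0
  have hspos : 0 < s := hs0.lt_of_ne (fun h => hsnot (h ▸ h0))
  refine ⟨s, hspos, hsnot, ?_, ?_⟩
  · intro t ht0 hts
    obtain ⟨t', ht', htt'⟩ := exists_lt_of_lt_csSup ⟨0, h0⟩ hts
    exact hoc.out h0 ht' ⟨ht0, htt'.le⟩
  · intro t hst hcl
    have := hc.openSegment_interior_closure_subset_interior (x := x) (y := γ t)
      (by rwa [hT.interior_eq]) hcl
    rw [hT.interior_eq] at this
    have htpos : 0 < t := hspos.trans hst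
    apply hsnot
    apply this
    rw [openSegment_eq_image']
    refine ⟨s / t, ⟨by positivity, (div_lt_one htpos).2 hst⟩, ?_⟩
    simp only [hγ, add_sub_cancel_left, smul_smul]
    rw [div_mul_cancel₀ _ htpos.ne']

namespace Arrangement

variable {d n : ℕ} (𝓗 : Arrangement d n)

lemma eventually_val (i : Fin n) (q : Fin d → ℝ) (c : ℝ) (h : 0 < 𝓗.val i q * c) :
    ∀ᶠ z in 𝓝 q, 0 < 𝓗.val i z * c := by
  have : Continuous (fun z => 𝓗.val i z * c) := (𝓗.continuous_val i).mul continuous_const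
  exact this.continuousAt.eventually_const_lt h

/-- Transfer of sign patterns from near `p` to near `q`. -/
lemma transfer (A : Finset (Fin n)) {p q z : Fin d → ℝ} (hp : p ∈ 𝓗.flat A) (hq : q ∈ 𝓗.flat A)
    (hz : z ∈ 𝓗.free) (h : ∀ j ∉ A, 0 < 𝓗.val j q * 𝓗.val j z)
    (N : Set (Fin d → ℝ)) (hN : N ∈ 𝓝 q) : ∃ z' ∈ N, z' ∈ 𝓗.free ∧ 𝓗.sgn z' = 𝓗.sgn z := by
  have hcont : Continuous (fun t : ℝ => q + t • (z - p)) := by fun_prop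
  have htend : Filter.Tendsto (fun t : ℝ => q + t • (z - p)) (𝓝 0) (𝓝 q) := by
    have := hcont.tendsto 0
    simpa using this
  have h1 : ∀ᶠ t in 𝓝 (0:ℝ), q + t • (z - p) ∈ N := htend.eventually hN
  have h2 : ∀ᶠ t in 𝓝 (0:ℝ), ∀ j, j ∉ A → 0 < 𝓗.val j (q + t • (z - p)) * 𝓗.val j z := by
    rw [Filter.eventually_all]
    intro j
    by_cases hj : j ∈ A
    · simp [hj]
    · have := htend.eventually (𝓗.eventually_val j q _ (h j hj))
      filter_upwards [this] with t ht _
      exact ht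
  have h3 : ∀ᶠ t in 𝓝[>] (0:ℝ), 0 < t := self_mem_nhdsWithin
  obtain ⟨t, ⟨ht1, ht2⟩, ht3⟩ := (((h1.and h2).filter_mono nhdsWithin_le_nhds).and h3).exists
  refine ⟨_, ht1, 𝓗.same_sgn fun i => ?_⟩
  by_cases hi : i ∈ A
  · rw [val_line, hq i hi, hp i hi]
    have : 𝓗.val i z ≠ 0 := (𝓗.mem_free z).1 hz i
    have : 0 < 𝓗.val i z * 𝓗.val i z := mul_self_pos.2 this
    nlinarith [mul_pos ht3 this]
  · exact ht2 i hi

lemma exists_val_ne (hgp : 𝓗.GeneralPosition) (hd : 1 ≤ d) (i : Fin n) :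
    ∃ z, 𝓗.val i z ≠ 0 := by
  obtain ⟨y, _, hy⟩ := 𝓗.exists_flat_one hgp ∅ (by simpa using hd) (j := i) (by simp) 1
  exact ⟨y, by rw [hy]; norm_num⟩

lemma exists_free (hgp : 𝓗.GeneralPosition) (hd : 1 ≤ d) (N : Set (Fin d → ℝ)) (hN : IsOpen N)
    (hne : N.Nonempty) : ∃ z ∈ N, z ∈ 𝓗.free := by
  obtain ⟨y, hy⟩ := hne
  obtain ⟨z, hz, _, hz2⟩ := perturb Set.univ (fun _ _ _ _ _ => Set.mem_univ _) 𝓗.val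
    𝓗.continuous_val (fun m x y t => 𝓗.val_line m x y x t) N hN y hy (Set.mem_univ _) Finset.univ
    (fun m _ => by
      obtain ⟨z, hz⟩ := 𝓗.exists_val_ne hgp hd m
      exact ⟨z, Set.mem_univ _, hz⟩)
  exact ⟨z, hz, (𝓗.mem_free z).2 fun i => hz2 i (Finset.mem_univ i)⟩

lemma mem_thick_of_good (hgp : 𝓗.GeneralPosition) (hd : 1 ≤ d) {S : Set (Set (Fin d → ℝ))}
    (hS : S ⊆ 𝓗.chambers) {p : Fin d → ℝ} (h : ∀ᶠ z in 𝓝 p, z ∈ 𝓗.free → z ∈ 𝓗.uni S) :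
    p ∈ thickening S := by
  unfold thickening
  rw [union_eq 𝓗 hS]
  obtain ⟨N, hN, hNo, hpN⟩ := eventually_nhds_iff.1 h
  refine mem_interior.2 ⟨N, ?_, hNo, hpN⟩
  intro q hq
  rw [mem_closure_iff]
  intro O hO hqO
  obtain ⟨z, hz, hzf⟩ := 𝓗.exists_free hgp hd (O ∩ N) (hO.inter hNo) ⟨q, hqO, hq⟩
  exact ⟨z, hz.1, hN z hz.2 hzf⟩

lemma pos_trans {a b c : ℝ} (h1 : 0 < a * b) (h2 : 0 < b * c) : 0 < a * c := by
  have hb : b ≠ 0 := by rintro rfl; simp at h1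
  have : 0 < b * b := mul_self_pos.2 hb
  have h3 := mul_pos h1 h2
  by_contra h
  push Not at h
  nlinarith

lemma core (hgp : 𝓗.GeneralPosition) (S : Set (Set (Fin d → ℝ))) (hS : S ⊆ 𝓗.chambers)
    (hconv : Convex ℝ (thickening S)) (A : Finset (Fin n)) (hA : A.card + 1 ≤ d)
    (x : Fin d → ℝ) (hxT : x ∈ thickening S) (hxA : x ∈ 𝓗.flat A)
    (N : Set (Fin d → ℝ)) (hN : IsOpen N) (y : Fin d → ℝ) (hyN : y ∈ N) (hyA : y ∈ 𝓗.flat A)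
    (hNT : ∀ z ∈ N, z ∉ thickening S) :
    ∃ f ∉ A, ∃ p ∈ 𝓗.flat A, ∃ σ : ℝ, σ ≠ 0 ∧ 𝓗.val f p = 0 ∧ p ∉ thickening S ∧
      (∀ j ∉ A, j ≠ f → 𝓗.val j p ≠ 0) ∧
      (∀ z ∈ 𝓗.free, (∀ j ∉ A, j ≠ f → 0 < 𝓗.val j p * 𝓗.val j z) → 0 < σ * 𝓗.val f z →
        z ∈ 𝓗.uni S) ∧
      (∀ z ∈ 𝓗.free, (∀ j ∉ A, j ≠ f → 0 < 𝓗.val j p * 𝓗.val j z) → σ * 𝓗.val f z < 0 →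
        z ∉ 𝓗.uni S) := by
  have hTo : IsOpen (thickening S) := isOpen_interior
  have hd : 1 ≤ d := by omega
  obtain ⟨x0, hx0T, hx0A, hx0⟩ := perturb (𝓗.flat A)
    (fun x hx y hy t => 𝓗.flat_line A hx hy t) 𝓗.val
    𝓗.continuous_val (fun m x y t => 𝓗.val_line m x y x t) _ hTo x hxT hxA
    (Finset.univ.filter (· ∉ A)) (fun j hj => by
      obtain ⟨z, hz, hz1⟩ := 𝓗.exists_flat_one hgp A hA (Finset.mem_filter.1 hj).2 1
      exact ⟨z, hz, by rw [hz1]; norm_num⟩)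
  replace hx0 : ∀ j ∉ A, 𝓗.val j x0 ≠ 0 := fun j hj => hx0 j (by simp [hj])
  obtain ⟨y0, hy0N, hy0A, hy0⟩ := perturb (𝓗.flat A)
    (fun x hx y hy t => 𝓗.flat_line A hx hy t)
    (fun (m : Fin n × Fin n) z => 𝓗.val m.1 x0 * 𝓗.val m.2 z - 𝓗.val m.2 x0 * 𝓗.val m.1 z)
    (fun m => (continuous_const.mul (𝓗.continuous_val _)).sub
      (continuous_const.mul (𝓗.continuous_val _)))
    (fun m x y t => by simp only [val_line]; ring) N hN y hyN hyA
    (Finset.univ.filter (fun m : Fin n × Fin n => m.1 ∉ A ∧ m.2 ∉ A ∧ m.1 ≠ m.2))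
    (fun m hm => by
      obtain ⟨h1, h2, h3⟩ := (Finset.mem_filter.1 hm).2
      obtain ⟨z, hz, hz1, hz2⟩ := 𝓗.exists_flat_two hgp A hA h1 h2 h3
      refine ⟨z, hz, ?_⟩
      simp only [hz1, mul_zero, sub_zero]
      exact mul_ne_zero (hx0 _ h1) hz2)
  replace hy0 : ∀ j ∉ A, ∀ l ∉ A, j ≠ l →
      𝓗.val j x0 * 𝓗.val l y0 - 𝓗.val l x0 * 𝓗.val j y0 ≠ 0 :=
    fun j hj l hl hjl => hy0 (j, l) (by simp [hj, hl, hjl])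
  obtain ⟨s, hs0, hsT, hlt, hgt⟩ := ray_exit _ hTo hconv x0 y0 hx0T (hNT y0 hy0N)
  set γ : ℝ → (Fin d → ℝ) := fun t => x0 + t • (y0 - x0) with hγ
  have hcont : Continuous γ := by fun_prop
  have hγA : ∀ t, γ t ∈ 𝓗.flat A := fun t => 𝓗.flat_line A hx0A hy0A t
  have hγv : ∀ t i, 𝓗.val i (γ t) = 𝓗.val i x0 + t * (𝓗.val i y0 - 𝓗.val i x0) :=
    fun t i => 𝓗.val_line i x0 y0 x0 t
  set p := γ s with hp
  have hlt' : ∀ t, 0 ≤ t → t < s → γ t ∈ thickening S := hlt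
  have hgt' : ∀ t, s < t → γ t ∉ closure (thickening S) := hgt
  have hsT' : p ∉ thickening S := hsT
  clear_value p
  -- points near `s`
  have hnear : ∀ᶠ t in 𝓝 s, ∀ j, 𝓗.val j p ≠ 0 → 0 < 𝓗.val j (γ t) * 𝓗.val j p := by
    rw [Filter.eventually_all]
    intro j
    by_cases hj : 𝓗.val j p = 0
    · simp [hj]
    · have h1 : 0 < 𝓗.val j (γ s) * 𝓗.val j p := by rw [← hp]; exact mul_self_pos.2 hj
      filter_upwards [(hcont.tendsto s).eventually (𝓗.eventually_val j _ _ h1)] with t ht _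
      exact ht
  obtain ⟨t1, ht1near, ht1s, ht10⟩ : ∃ t, (∀ j, 𝓗.val j p ≠ 0 → 0 < 𝓗.val j (γ t) * 𝓗.val j p) ∧
      t < s ∧ 0 < t := by
    have h3 : ∀ᶠ t in 𝓝[<] s, t < s := self_mem_nhdsWithin
    have h4 : ∀ᶠ t in 𝓝 s, 0 < t := lt_mem_nhds hs0
    obtain ⟨t, ⟨h1, h2⟩, h3⟩ := (((hnear.and h4).filter_mono nhdsWithin_le_nhds).and h3).exists
    exact ⟨t, h1, h3, h2⟩
  obtain ⟨t2, ht2near, ht2s⟩ : ∃ t, (∀ j, 𝓗.val j p ≠ 0 → 0 < 𝓗.val j (γ t) * 𝓗.val j p) ∧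
      s < t := by
    have h3 : ∀ᶠ t in 𝓝[>] s, s < t := self_mem_nhdsWithin
    obtain ⟨t, h1, h3⟩ := ((hnear.filter_mono nhdsWithin_le_nhds).and h3).exists
    exact ⟨t, h1, h3⟩
  have hq1T := hlt' t1 ht10.le ht1s
  have hpA : p ∈ 𝓗.flat A := hp ▸ hγA s
  have trans1 : ∀ z ∈ 𝓗.free, (∀ j ∉ A, 0 < 𝓗.val j (γ t1) * 𝓗.val j z) → z ∈ 𝓗.uni S := by
    intro z hz h
    obtain ⟨z', hz'N, hz'f, hz's⟩ := 𝓗.transfer A hpA (hγA t1) hz h _ (hTo.mem_nhds hq1T)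
    exact 𝓗.uni_congr (𝓗.mem_uni_of_free hS hz'f hz'N) hz hz's.symm
  have hexf : ∃ f ∉ A, 𝓗.val f p = 0 := by
    by_contra hno
    push Not at hno
    apply hsT'
    apply 𝓗.mem_thick_of_good hgp hd hS
    have : ∀ᶠ z in 𝓝 p, ∀ j, j ∉ A → 0 < 𝓗.val j z * 𝓗.val j p := by
      rw [Filter.eventually_all]
      intro j
      by_cases hj : j ∈ A
      · simp [hj]
      · filter_upwards [𝓗.eventually_val j p _ (mul_self_pos.2 (hno j hj))] with z hz _
        exact hz
    filter_upwards [this] with z hz hzf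
    apply trans1 z hzf
    intro j hj
    have h1 := hz j hj
    rw [mul_comm] at h1
    exact pos_trans (ht1near j (hno j hj)) h1
  obtain ⟨f, hfA, hfp⟩ := hexf
  have hother : ∀ j ∉ A, j ≠ f → 𝓗.val j p ≠ 0 := by
    intro j hj hjf hjp
    apply hy0 j hj f hfA hjf
    rw [hp, hγv] at hjp hfp
    have : s * (𝓗.val j x0 * 𝓗.val f y0 - 𝓗.val f x0 * 𝓗.val j y0) = 0 := by
      linear_combination 𝓗.val j x0 * hfp - 𝓗.val f x0 * hjp
    rcases mul_eq_zero.1 this with h | h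
    · exact absurd h hs0.ne'
    · exact h
  have hσ := hx0 f hfA
  have hσ2 : 0 < 𝓗.val f x0 * 𝓗.val f x0 := mul_self_pos.2 hσ
  have hfline : ∀ t, s * (𝓗.val f (γ t) * 𝓗.val f x0) = (s - t) * (𝓗.val f x0 * 𝓗.val f x0) := by
    intro t
    have h1 := hfp
    rw [hp, hγv] at h1
    rw [hγv]
    linear_combination (t * 𝓗.val f x0) * h1
  refine ⟨f, hfA, p, hpA, 𝓗.val f x0, hσ, hfp, hsT', hother, ?_, ?_⟩
  · intro z hz h1 h2
    apply trans1 z hz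
    intro j hj
    by_cases hjf : j = f
    · subst hjf
      refine pos_trans ?_ h2
      have h3 : 0 < s * (𝓗.val j (γ t1) * 𝓗.val j x0) := by
        rw [hfline]; exact mul_pos (by linarith) hσ2
      exact pos_of_mul_pos_right h3 hs0.le
    · exact pos_trans (ht1near j (hother j hj hjf)) (h1 j hj hjf)
  · intro z hz h1 h2 hzU
    obtain ⟨z', hz'N, hz'f, hz's⟩ := 𝓗.transfer A hpA (hγA t2) hz (by
      intro j hj
      by_cases hjf : j = f
      · subst hjf
        have h3 : 0 < s * -(𝓗.val j (γ t2) * 𝓗.val j x0) := by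
          have := mul_pos (sub_pos.2 ht2s) hσ2
          have h4 := hfline t2
          linarith
        have h5 := pos_of_mul_pos_right h3 hs0.le
        have h6 : 0 < 𝓗.val j (γ t2) * -𝓗.val j x0 := by linarith
        have h7 : 0 < -𝓗.val j x0 * 𝓗.val j z := by linarith
        exact pos_trans h6 h7
      · exact pos_trans (ht2near j (hother j hj hjf)) (h1 j hj hjf)) _
      (isClosed_closure.isOpen_compl.mem_nhds (hgt' t2 ht2s))
    exact hz'N (subset_closure (𝓗.uni_sub hS (𝓗.uni_congr hzU hz'f hz's)))

lemma exists_bounding (hgp : 𝓗.GeneralPosition) (hd : 1 ≤ d) (S : Set (Set (Fin d → ℝ)))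
    (hS : S ⊆ 𝓗.chambers)
    (hconv : Convex ℝ (thickening S)) (x : Fin d → ℝ) (hx : x ∈ thickening S)
    (y : Fin d → ℝ) (hy : y ∈ 𝓗.free) (hyU : y ∉ 𝓗.uni S) :
    ∃ f, ∃ σ : ℝ, σ ≠ 0 ∧ ∀ z ∈ thickening S, 0 ≤ σ * 𝓗.val f z := by
  obtain ⟨f, -, p, -, σ, hσ, hfp, hpT, hother, hin, -⟩ := 𝓗.core hgp S hS hconv ∅ (by simpa using hd)
    x hx (by intro i hi; simp at hi) (𝓗.cell (𝓗.sgn y)) (𝓗.isOpen_cell hy) y ⟨hy, rfl⟩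
    (by intro i hi; simp at hi) (fun z hz hzT =>
      hyU (𝓗.uni_congr (𝓗.mem_uni_of_free hS hz.1 hzT) hy hz.2.symm))
  refine ⟨f, σ, hσ, fun z hz => ?_⟩
  by_contra hneg
  push Not at hneg
  have hcont : Continuous (fun t : ℝ => p + t • (p - z)) := by fun_prop
  have htend : Filter.Tendsto (fun t : ℝ => p + t • (p - z)) (𝓝 0) (𝓝 p) := by
    have := hcont.tendsto 0
    simpa using this
  have h2 : ∀ᶠ t in 𝓝 (0:ℝ), ∀ j, j ≠ f → 0 < 𝓗.val j (p + t • (p - z)) * 𝓗.val j p := by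
    rw [Filter.eventually_all]
    intro j
    by_cases hj : j = f
    · simp [hj]
    · have := htend.eventually (𝓗.eventually_val j p _
        (mul_self_pos.2 (hother j (by simp) hj)))
      filter_upwards [this] with t ht _
      exact ht
  have h3 : ∀ᶠ t in 𝓝[>] (0:ℝ), 0 < t := self_mem_nhdsWithin
  obtain ⟨t, ht2, ht3⟩ := ((h2.filter_mono nhdsWithin_le_nhds).and h3).exists
  have hfv : 0 < σ * 𝓗.val f (p + t • (p - z)) := by
    rw [val_line, hfp]
    nlinarith [mul_pos ht3 (neg_pos.2 hneg)]
  have hc : p + t • (p - z) ∈ thickening S := by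
    apply 𝓗.uni_sub hS
    apply hin _ _ _ hfv
    · rw [mem_free]
      intro i h0
      by_cases hi : i = f
      · subst hi; rw [h0] at hfv; simp at hfv
      · have := ht2 i hi; rw [h0] at this; simp at this
    · intro j _ hj
      rw [mul_comm]; exact ht2 j hj
  apply hpT
  have := hconv hc hz (a := 1/(1+t)) (b := t/(1+t)) (by positivity) (by positivity)
    (by field_simp)
  convert this using 1
  ext j
  simp only [Pi.add_apply, Pi.smul_apply, Pi.sub_apply, smul_eq_mul]
  field_simp
  ring

lemma flat_of_shatter (A : Finset (Fin n)) : ∀ (T : Set (Fin d → ℝ)), Convex ℝ T →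
    (∀ X ⊆ A, ∃ x ∈ T, ∀ i ∈ A, if i ∈ X then 0 < 𝓗.val i x else 𝓗.val i x < 0) →
    ∃ x ∈ T, x ∈ 𝓗.flat A := by
  induction A using Finset.induction_on with
  | empty =>
    intro T _ h
    obtain ⟨x, hx, _⟩ := h ∅ (by simp)
    exact ⟨x, hx, by intro i hi; simp at hi⟩
  | insert a A ha ih =>
    intro T hT h
    obtain ⟨x, hx, hxA⟩ := ih (T ∩ {x | 𝓗.val a x = 0}) (hT.inter (by
      intro y hy z hz u v hu hv huv
      simp only [Set.mem_ofPred_eq] at *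
      rw [val_comb 𝓗 a y z u v huv, hy, hz]; ring)) (by
      intro X hX
      obtain ⟨y, hyT, hy⟩ := h (insert a X) (Finset.insert_subset_insert a hX)
      obtain ⟨z, hzT, hz⟩ := h X (hX.trans (Finset.subset_insert a A))
      have hya := hy a (Finset.mem_insert_self _ _)
      have hza := hz a (Finset.mem_insert_self _ _)
      rw [if_pos (Finset.mem_insert_self _ _)] at hya
      rw [if_neg (fun h => ha (hX h))] at hza
      set u := 𝓗.val a y
      set v := 𝓗.val a z
      have huv : 0 < u - v := by linarith
      have hu1 : 0 < -v / (u - v) := div_pos (by linarith) huv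
      have hu2 : 0 < u / (u - v) := div_pos hya huv
      have hsum : -v / (u - v) + u / (u - v) = 1 := by field_simp; ring
      refine ⟨(-v / (u - v)) • y + (u / (u - v)) • z, ⟨hT hyT hzT hu1.le hu2.le hsum, ?_⟩, ?_⟩
      · simp only [Set.mem_ofPred_eq]
        rw [val_comb 𝓗 a y z _ _ hsum]
        field_simp
        ring
      · intro i hi
        have hia : i ≠ a := by rintro rfl; exact ha hi
        have h1 := hy i (Finset.mem_insert_of_mem hi)
        have h2 := hz i (Finset.mem_insert_of_mem hi)
        rw [val_comb 𝓗 i y z _ _ hsum]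
        by_cases hiX : i ∈ X
        · rw [if_pos (Finset.mem_insert_of_mem hiX)] at h1
          rw [if_pos hiX] at h2 ⊢
          exact add_pos (mul_pos hu1 h1) (mul_pos hu2 h2)
        · rw [if_neg (by simp [hia, hiX])] at h1
          rw [if_neg hiX] at h2 ⊢
          nlinarith [mul_pos hu1 (neg_pos.2 h1), mul_pos hu2 (neg_pos.2 h2)])
    refine ⟨x, hx.1, fun i hi => ?_⟩
    rcases Finset.mem_insert.1 hi with rfl | hi
    · exact hx.2
    · exact hxA i hi

end Arrangement

namespace Arrangement

open Classical in
/-- Sign sets of the chambers in `S`. -/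
def fam {d n : ℕ} (𝓗 : Arrangement d n) (S : Set (Set (Fin d → ℝ))) : Finset (Finset (Fin n)) :=
  Finset.univ.filter (fun P => ∃ x ∈ 𝓗.uni S, 𝓗.sgn x = P)

open Classical in
/-- Boundary edges across the `f`-th hyperplane. -/
def bdry {d n : ℕ} (𝓗 : Arrangement d n) (S : Set (Set (Fin d → ℝ))) (f : Fin n) :
    Finset (Finset (Fin n)) :=
  Finset.univ.filter (fun P => f ∉ P ∧ (∃ x ∈ 𝓗.free, 𝓗.sgn x = P) ∧
    (∃ x ∈ 𝓗.free, 𝓗.sgn x = insert f P) ∧ ¬ (P ∈ 𝓗.fam S ↔ insert f P ∈ 𝓗.fam S))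

variable {d n : ℕ} (𝓗 : Arrangement d n)

lemma mem_bdry {S : Set (Set (Fin d → ℝ))} {f : Fin n} {P : Finset (Fin n)} :
    P ∈ 𝓗.bdry S f ↔ f ∉ P ∧ (∃ x ∈ 𝓗.free, 𝓗.sgn x = P) ∧
    (∃ x ∈ 𝓗.free, 𝓗.sgn x = insert f P) ∧ ¬ (P ∈ 𝓗.fam S ↔ insert f P ∈ 𝓗.fam S) := by
  simp [bdry]

lemma mem_fam {S : Set (Set (Fin d → ℝ))} {P : Finset (Fin n)} :
    P ∈ 𝓗.fam S ↔ ∃ x ∈ 𝓗.uni S, 𝓗.sgn x = P := by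
  simp [fam]

lemma sgn_mem_fam {S : Set (Set (Fin d → ℝ))} {x : Fin d → ℝ} (hx : x ∈ 𝓗.free) :
    𝓗.sgn x ∈ 𝓗.fam S ↔ x ∈ 𝓗.uni S := by
  rw [mem_fam]
  constructor
  · rintro ⟨y, hy, h⟩; exact 𝓗.uni_congr hy hx h.symm
  · intro h; exact ⟨x, h, rfl⟩

lemma exists_near (hgp : 𝓗.GeneralPosition) (A : Finset (Fin n)) (hA : A.card + 1 ≤ d)
    (f : Fin n) (hf : f ∉ A) (p : Fin d → ℝ) (hp : p ∈ 𝓗.flat A) (hfp : 𝓗.val f p = 0)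
    (hother : ∀ j ∉ A, j ≠ f → 𝓗.val j p ≠ 0) (Y : Finset (Fin n)) (hY : Y ⊆ insert f A) :
    ∃ z ∈ 𝓗.free, (∀ j ∉ A, j ≠ f → 0 < 𝓗.val j p * 𝓗.val j z) ∧
      ∀ i ∈ insert f A, if i ∈ Y then 0 < 𝓗.val i z else 𝓗.val i z < 0 := by
  obtain ⟨w, hw⟩ := 𝓗.exists_lin hgp (insert f A) (by rwa [Finset.card_insert_of_notMem hf])
    (fun i => if i ∈ Y then 1 else -1)
  have hcont : Continuous (fun t : ℝ => p + t • w) := by fun_prop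
  have htend : Filter.Tendsto (fun t : ℝ => p + t • w) (𝓝 0) (𝓝 p) := by
    have := hcont.tendsto 0
    simpa using this
  have h2 : ∀ᶠ t in 𝓝 (0:ℝ), ∀ j, j ∉ A → j ≠ f → 0 < 𝓗.val j (p + t • w) * 𝓗.val j p := by
    rw [Filter.eventually_all]
    intro j
    by_cases hj : j ∈ A
    · simp [hj]
    by_cases hjf : j = f
    · simp [hjf]
    · have := htend.eventually (𝓗.eventually_val j p _ (mul_self_pos.2 (hother j hj hjf)))
      filter_upwards [this] with t ht _ _
      exact ht
  have h3 : ∀ᶠ t in 𝓝[>] (0:ℝ), 0 < t := self_mem_nhdsWithin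
  obtain ⟨t, ht2, ht3⟩ := ((h2.filter_mono nhdsWithin_le_nhds).and h3).exists
  have hz0 : ∀ i ∈ insert f A, 𝓗.val i p = 0 := by
    intro i hi
    rcases Finset.mem_insert.1 hi with rfl | hi
    · exact hfp
    · exact hp i hi
  have hlast : ∀ i ∈ insert f A, if i ∈ Y then 0 < 𝓗.val i (p + t • w) else 𝓗.val i (p + t • w) < 0 := by
    intro i hi
    rw [val_add_smul, hz0 i hi, hw i hi]
    by_cases hiY : i ∈ Y
    · simp [hiY, ht3]
    · simp [hiY, ht3]
  refine ⟨p + t • w, ?_, ?_, hlast⟩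
  · rw [mem_free]
    intro i h0
    by_cases hi : i ∈ insert f A
    · have := hlast i hi
      rw [h0] at this
      simp at this
    · simp only [Finset.mem_insert, not_or] at hi
      have := ht2 i hi.2 hi.1
      rw [h0] at this; simp at this
  · intro j hj hjf
    rw [mul_comm]; exact ht2 j hj hjf

lemma exists_cube (hgp : 𝓗.GeneralPosition) (S : Set (Set (Fin d → ℝ))) (hS : S ⊆ 𝓗.chambers)
    (hproper : S ≠ 𝓗.chambers)
    (hconv : Convex ℝ (thickening S)) (A : Finset (Fin n)) (hA : A.card < d)
    (hsh : (𝓗.fam S).Shatters A) (x : Fin d → ℝ) (hxT : x ∈ thickening S) (hxA : x ∈ 𝓗.flat A) :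
    ∃ f, ∃ B : Finset (Fin n), Disjoint A B ∧ ∀ X ⊆ A, B ∪ X ∈ 𝓗.bdry S f := by
  obtain ⟨y, hy, hyU⟩ : ∃ y ∈ 𝓗.free, y ∉ 𝓗.uni S := by
    by_contra hno
    push Not at hno
    apply hproper
    apply Set.Subset.antisymm hS
    intro C hC
    obtain ⟨y, hy, rfl⟩ := (𝓗.mem_chambers C).1 hC
    exact (hno y hy).2
  obtain ⟨f0, σ0, hσ0, hb⟩ := 𝓗.exists_bounding hgp (by omega) S hS hconv x hxT y hy hyU
  have hf0 : f0 ∉ A := by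
    intro hf0
    rcases lt_or_gt_of_ne hσ0 with h | h
    · obtain ⟨P, hP, hPA⟩ := hsh (t := A) (Finset.Subset.refl A)
      obtain ⟨z, hz, rfl⟩ := 𝓗.mem_fam.1 hP
      have h1 := hb z (𝓗.uni_sub hS hz)
      have h2 : f0 ∈ 𝓗.sgn z := Finset.inter_eq_left.1 hPA hf0
      rw [mem_sgn] at h2
      nlinarith
    · obtain ⟨P, hP, hPA⟩ := hsh (t := ∅) (Finset.empty_subset A)
      obtain ⟨z, hz, rfl⟩ := 𝓗.mem_fam.1 hP
      have h1 := hb z (𝓗.uni_sub hS hz)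
      have h2 : f0 ∉ 𝓗.sgn z := by
        intro h3
        have : f0 ∈ A ∩ 𝓗.sgn z := Finset.mem_inter.2 ⟨hf0, h3⟩
        rw [hPA] at this; simp at this
      rw [mem_sgn, not_lt] at h2
      have h3 : 𝓗.val f0 z < 0 := lt_of_le_of_ne h2 ((𝓗.mem_free z).1 hz.1 f0)
      nlinarith
  obtain ⟨u, huA, hu⟩ := 𝓗.exists_flat_one hgp A hA hf0 (-σ0)
  obtain ⟨f, hf, p, hp, σ, hσ, hfp, -, hother, hin, hout⟩ := 𝓗.core hgp S hS hconv A hA x hxT hxA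
    {z | σ0 * 𝓗.val f0 z < 0}
    (isOpen_lt (continuous_const.mul (𝓗.continuous_val f0)) continuous_const) u
    (by show σ0 * 𝓗.val f0 u < 0
        rw [hu]; nlinarith [mul_self_pos.2 hσ0]) huA
    (fun z hz hzT => absurd (hb z hzT) (not_le.2 hz))
  refine ⟨f, Finset.univ.filter (fun j => j ∉ A ∧ j ≠ f ∧ 0 < 𝓗.val j p), ?_, ?_⟩
  · rw [Finset.disjoint_left]
    intro i hi hi'
    exact (Finset.mem_filter.1 hi').2.1 hi
  intro X hX
  set B := Finset.univ.filter (fun j => j ∉ A ∧ j ≠ f ∧ 0 < 𝓗.val j p) with hB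
  have hfX : f ∉ X := fun h => hf (hX h)
  have hfBX : f ∉ B ∪ X := by simp [hB, hfX]
  have key : ∀ Y ⊆ insert f A, ∀ z ∈ 𝓗.free, (∀ j ∉ A, j ≠ f → 0 < 𝓗.val j p * 𝓗.val j z) →
      (∀ i ∈ insert f A, if i ∈ Y then 0 < 𝓗.val i z else 𝓗.val i z < 0) →
      𝓗.sgn z = B ∪ Y := by
    intro Y hY z hz h1 h2
    ext i
    rw [mem_sgn, Finset.mem_union]
    by_cases hi : i ∈ insert f A
    · have hiB : i ∉ B := by
        intro h
        have := (Finset.mem_filter.1 h).2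
        rcases Finset.mem_insert.1 hi with h' | h'
        · exact this.2.1 h'
        · exact this.1 h'
      have := h2 i hi
      by_cases hiY : i ∈ Y
      · rw [if_pos hiY] at this
        simp [hiY, this]
      · rw [if_neg hiY] at this
        simp [hiY, hiB, this.le]
    · have hiY : i ∉ Y := fun h => hi (hY h)
      simp only [Finset.mem_insert, not_or] at hi
      have h3 := pos_iff_pos_of_mul_pos (h1 i hi.2 hi.1)
      simp [hiY, hB, hi.1, hi.2, h3]
  obtain ⟨z1, hz1, hz1p, hz1s⟩ := 𝓗.exists_near hgp A hA f hf p hp hfp hother X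
    (hX.trans (Finset.subset_insert f A))
  obtain ⟨z2, hz2, hz2p, hz2s⟩ := 𝓗.exists_near hgp A hA f hf p hp hfp hother (insert f X)
    (Finset.insert_subset_insert f hX)
  have e1 := key X (hX.trans (Finset.subset_insert f A)) z1 hz1 hz1p hz1s
  have e2 := key _ (Finset.insert_subset_insert f hX) z2 hz2 hz2p hz2s
  rw [Finset.union_insert] at e2
  have v1 := hz1s f (Finset.mem_insert_self _ _)
  have v2 := hz2s f (Finset.mem_insert_self _ _)
  rw [if_neg hfX] at v1
  rw [if_pos (Finset.mem_insert_self _ _)] at v2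
  rw [mem_bdry]
  refine ⟨hfBX, ⟨z1, hz1, e1⟩, ⟨z2, hz2, e2⟩, ?_⟩
  rw [← e2, ← e1, 𝓗.sgn_mem_fam hz1, 𝓗.sgn_mem_fam hz2]
  rcases lt_or_gt_of_ne hσ with h | h
  · have a1 := hin z1 hz1 hz1p (mul_pos_of_neg_of_neg h v1)
    have a2 := hout z2 hz2 hz2p (mul_neg_of_neg_of_pos h v2)
    tauto
  · have a1 := hout z1 hz1 hz1p (mul_neg_of_pos_of_neg h v1)
    have a2 := hin z2 hz2 hz2p (mul_pos h v2)
    tauto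

lemma cell_inj {P Q : Finset (Fin n)} (hP : ∃ x ∈ 𝓗.free, 𝓗.sgn x = P)
    (h : 𝓗.cell P = 𝓗.cell Q) : P = Q := by
  obtain ⟨x, hx, rfl⟩ := hP
  have : x ∈ 𝓗.cell Q := h ▸ ⟨hx, rfl⟩
  exact this.2

lemma sep_iff {P Q : Finset (Fin n)} (hP : ∃ x ∈ 𝓗.free, 𝓗.sgn x = P)
    (hQ : ∃ x ∈ 𝓗.free, 𝓗.sgn x = Q) (e : Fin n) :
    𝓗.Separates e (𝓗.cell P) (𝓗.cell Q) ↔ ¬ (e ∈ P ↔ e ∈ Q) := by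
  have hpos : ∀ P : Finset (Fin n), (∃ x ∈ 𝓗.free, 𝓗.sgn x = P) →
      (𝓗.cell P ⊆ 𝓗.pos e ↔ e ∈ P) := by
    rintro P ⟨x, hx, rfl⟩
    constructor
    · intro h
      rw [mem_sgn, ← mem_pos]
      exact h ⟨hx, rfl⟩
    · intro h y hy
      rw [mem_pos, ← mem_sgn, hy.2]; exact h
  have hneg : ∀ P : Finset (Fin n), (∃ x ∈ 𝓗.free, 𝓗.sgn x = P) →
      (𝓗.cell P ⊆ 𝓗.neg e ↔ e ∉ P) := by
    rintro P ⟨x, hx, rfl⟩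
    constructor
    · intro h
      have := h (a := x) ⟨hx, rfl⟩
      rw [mem_neg] at this
      rw [mem_sgn, not_lt]; exact this.le
    · intro h y hy
      rw [← hy.2, mem_sgn, not_lt] at h
      rw [mem_neg]
      exact lt_of_le_of_ne h ((𝓗.mem_free y).1 hy.1 e)
  rw [Separates, hpos P hP, hneg P hP, hpos Q hQ, hneg Q hQ]
  tauto

lemma cell_mem_S {S : Set (Set (Fin d → ℝ))} {P : Finset (Fin n)}
    (hP : ∃ x ∈ 𝓗.free, 𝓗.sgn x = P) : 𝓗.cell P ∈ S ↔ P ∈ 𝓗.fam S := by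
  obtain ⟨x, hx, rfl⟩ := hP
  rw [𝓗.sgn_mem_fam hx]
  exact ⟨fun h => ⟨hx, h⟩, fun h => h.2⟩

lemma adj_flip {P : Finset (Fin n)} {f : Fin n} (hf : f ∉ P) (hP : ∃ x ∈ 𝓗.free, 𝓗.sgn x = P)
    (hQ : ∃ x ∈ 𝓗.free, 𝓗.sgn x = insert f P) :
    𝓗.Adj (𝓗.cell P) (𝓗.cell (insert f P)) ∧ 𝓗.Adj (𝓗.cell (insert f P)) (𝓗.cell P) := by
  have c1 : 𝓗.cell P ∈ 𝓗.chambers := by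
    obtain ⟨x, hx, rfl⟩ := hP
    exact (𝓗.mem_chambers _).2 ⟨x, hx, rfl⟩
  have c2 : 𝓗.cell (insert f P) ∈ 𝓗.chambers := by
    obtain ⟨x, hx, h⟩ := hQ
    exact (𝓗.mem_chambers _).2 ⟨x, hx, by rw [h]⟩
  refine ⟨⟨c1, c2, f, ?_, ?_⟩, ⟨c2, c1, f, ?_, ?_⟩⟩
  · simp only [𝓗.sep_iff hP hQ]; simp [hf]
  · intro e he
    simp only [𝓗.sep_iff hP hQ, Finset.mem_insert] at he
    tauto
  · simp only [𝓗.sep_iff hQ hP]; simp [hf]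
  · intro e he
    simp only [𝓗.sep_iff hQ hP, Finset.mem_insert] at he
    tauto

lemma chambers_finite : 𝓗.chambers.Finite := by
  apply (Set.finite_range 𝓗.cell).subset
  intro C hC
  obtain ⟨x, _, rfl⟩ := (𝓗.mem_chambers C).1 hC
  exact ⟨_, rfl⟩

lemma ncard_S_le {S : Set (Set (Fin d → ℝ))} (hS : S ⊆ 𝓗.chambers) :
    S.ncard ≤ (𝓗.fam S).card := by
  classical
  have : S ⊆ ((𝓗.fam S).image 𝓗.cell : Finset _) := by
    intro C hC
    obtain ⟨x, hx, rfl⟩ := (𝓗.mem_chambers C).1 (hS hC)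
    simp only [Finset.coe_image, Set.mem_image, Finset.mem_coe]
    exact ⟨_, (𝓗.cell_mem_S ⟨x, hx, rfl⟩).1 hC, rfl⟩
  calc S.ncard ≤ (((𝓗.fam S).image 𝓗.cell : Finset _) : Set (Set (Fin d → ℝ))).ncard :=
        Set.ncard_le_ncard this (Finset.finite_toSet _)
    _ = ((𝓗.fam S).image 𝓗.cell).card := Set.ncard_coe_finset _
    _ ≤ _ := Finset.card_image_le

open Classical in
lemma sum_bdry_le (S : Set (Set (Fin d → ℝ))) :
    ∑ f, (𝓗.bdry S f).card ≤ (𝓗.edgeBoundary S).ncard := by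
  rw [← Finset.card_sigma, ← Set.ncard_coe_finset]
  have hfin : (𝓗.edgeBoundary S).Finite := by
    apply (𝓗.chambers_finite.prod 𝓗.chambers_finite).subset
    rintro ⟨C, D⟩ ⟨_, _, h1, h2, _⟩
    exact ⟨h1, h2⟩
  refine Set.ncard_le_ncard_of_injOn
    (fun m : (_ : Fin n) × Finset (Fin n) => if m.2 ∈ 𝓗.fam S then
      (𝓗.cell m.2, 𝓗.cell (insert m.1 m.2)) else (𝓗.cell (insert m.1 m.2), 𝓗.cell m.2)) ?_ ?_ hfin
  · rintro ⟨f, P⟩ hm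
    simp only [Finset.coe_sigma, Set.mem_sigma_iff, Finset.mem_coe] at hm
    obtain ⟨-, hf, hP, hQ, hx⟩ := Finset.mem_filter.1 hm.2
    have hadj := 𝓗.adj_flip hf hP hQ
    by_cases hPf : P ∈ 𝓗.fam S
    · simp only [hPf, if_true]
      refine ⟨(𝓗.cell_mem_S hP).2 hPf, fun h => ?_, hadj.1⟩
      have := (𝓗.cell_mem_S hQ).1 h
      tauto
    · simp only [hPf, if_false]
      refine ⟨(𝓗.cell_mem_S hQ).2 (by tauto), fun h => hPf ((𝓗.cell_mem_S hP).1 h), hadj.2⟩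
  · rintro ⟨f, P⟩ hm ⟨g, R⟩ hm' heq
    simp only [Finset.coe_sigma, Set.mem_sigma_iff, Finset.mem_coe] at hm hm'
    obtain ⟨-, hf, hP, hQ, hx⟩ := Finset.mem_filter.1 hm.2
    obtain ⟨-, hg, hR, hQ', hx'⟩ := Finset.mem_filter.1 hm'.2
    have fin : P = R → insert f P = insert g R → (⟨f, P⟩ : (_ : Fin n) × Finset (Fin n)) = ⟨g, R⟩ := by
      rintro rfl h
      have : f ∈ insert g P := h ▸ Finset.mem_insert_self f P
      rcases Finset.mem_insert.1 this with rfl | h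
      · rfl
      · exact absurd h hf
    have nofin : P = insert g R → insert f P = R → False := by
      intro h1 h2
      apply hg
      rw [← h2, h1]
      simp
    by_cases h1 : P ∈ 𝓗.fam S <;> by_cases h2 : R ∈ 𝓗.fam S <;>
      simp only [h1, h2, if_true, if_false, Prod.mk.injEq] at heq
    · exact fin (𝓗.cell_inj hP heq.1) (𝓗.cell_inj hQ heq.2)
    · exact (nofin (𝓗.cell_inj hP heq.1) (𝓗.cell_inj hQ heq.2)).elim
    · exact (nofin (𝓗.cell_inj hP heq.2) (𝓗.cell_inj hQ heq.1)).elim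
    · exact fin (𝓗.cell_inj hP heq.2) (𝓗.cell_inj hQ heq.1)

end Arrangement


/-- A proper convex subset `S` of the chambers of an arrangement in
general position in `ℝ^d`, with `|S| = ∑_{i=0}^d C(k,i)` for some real `k ≥ d-1`,
satisfies `|∂S| ≥ ∑_{i=0}^{d-1} C(k,i)`. -/
theorem stmt6 {d n : ℕ} (𝓗 : Arrangement d n) (hgp : 𝓗.GeneralPosition)
    (S : Set (Set (Fin d → ℝ))) (hS : S ⊆ 𝓗.chambers)
    (hproper : S ≠ 𝓗.chambers)
    (hconv : Convex ℝ (thickening S))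
    (k : ℝ) (hk : (d : ℝ) - 1 ≤ k)
    (hcard : (S.ncard : ℝ) = ∑ i ∈ Finset.range (d + 1), gchoose k i) :
    (∑ i ∈ Finset.range d, gchoose k i) ≤ ((𝓗.edgeBoundary S).ncard : ℝ) := by
  classical
  rcases Nat.eq_zero_or_pos d with rfl | hd
  · simp
  set K := (𝓗.fam S).shatterer with hK
  have hflat : ∀ A ∈ K, ∃ x ∈ thickening S, x ∈ 𝓗.flat A := by
    intro A hA
    rw [hK, Finset.mem_shatterer] at hA
    apply 𝓗.flat_of_shatter A _ hconv
    intro X hX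
    obtain ⟨P, hP, hPX⟩ := hA hX
    obtain ⟨x, hx, rfl⟩ := 𝓗.mem_fam.1 hP
    refine ⟨x, 𝓗.uni_sub hS hx, fun i hi => ?_⟩
    have hiff : i ∈ X ↔ 0 < 𝓗.val i x := by
      rw [← hPX, Finset.mem_inter, 𝓗.mem_sgn]; tauto
    by_cases h : i ∈ X
    · rw [if_pos h]; exact hiff.1 h
    · rw [if_neg h]
      exact lt_of_le_of_ne (not_lt.1 fun h' => h (hiff.2 h')) ((𝓗.mem_free x).1 hx.1 i)
  have h1 := numeric (d := d) K (Finset.isLowerSet_shatterer _) (fun A hA => by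
    obtain ⟨x, _, hx⟩ := hflat A hA
    exact 𝓗.card_le_of_flat hgp A hx) k hk (by
    rw [← hcard]
    exact_mod_cast (𝓗.ncard_S_le hS).trans (Finset.card_le_card_shatterer _))
  refine h1.trans ?_
  have h2 : (K.filter (fun s => s.card < d)).card ≤ ∑ f, (𝓗.bdry S f).card := by
    let G : Fin n → Finset (Finset (Fin n)) := fun f => K.filter (fun A =>
      ∃ B : Finset (Fin n), Disjoint A B ∧ ∀ X ⊆ A, B ∪ X ∈ 𝓗.bdry S f)
    have hsub : K.filter (fun s => s.card < d) ⊆ Finset.univ.biUnion G := by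
      intro A hA
      obtain ⟨hAK, hAd⟩ := Finset.mem_filter.1 hA
      obtain ⟨x, hxT, hxA⟩ := hflat A hAK
      obtain ⟨f, hf⟩ := 𝓗.exists_cube hgp S hS hproper hconv A hAd (Finset.mem_shatterer.1 hAK)
        x hxT hxA
      exact Finset.mem_biUnion.2 ⟨f, Finset.mem_univ f, Finset.mem_filter.2 ⟨hAK, hf⟩⟩
    calc _ ≤ _ := Finset.card_le_card hsub
      _ ≤ ∑ f, (G f).card := Finset.card_biUnion_le
      _ ≤ _ := Finset.sum_le_sum fun f _ =>
        strong_shatter _ _ fun A hA => (Finset.mem_filter.1 hA).2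
  exact_mod_cast h2.trans (𝓗.sum_bdry_le S)
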